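/- Assume the grid is equidistant with stepsize h = h_j for all j, and assume h·σ_max(Γ̄V̄) ≤ σ_min(ΓV), where σ_max, σ_min denote largest and smallest singular values. Then, with ℛ the representation map and the norms ‖·‖_{L²}, ‖·‖_{H¹_{D,π}} as above: (i) sup_{c≠0} ‖ℛc‖_{L²}/|c| = h^{1/2} σ_max(ΓV); (ii) sup_{c≠0} |c|/‖ℛc‖_{L²} = h^{−3/2} σ_min(Γ̄V̄)^{−1}; (iii) h^{1/2} σ_max(ΓV) ≤ sup_{c≠0} ‖ℛc‖_{H¹_{D,π}}/|c| ≤ h^{1/2} (σ_max(ΓV)² + h² σ_max(Γ̄V̄)²)^{1/2}; (iv) h^{−3/2} σ_max(Γ̄V̄)^{−1} ≤ sup_{c≠0} |c|/‖ℛc‖_{H¹_{D,π}} ≤ h^{−3/2} σ_min(Γ̄V̄)^{−1}. -/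

import Mathlib

open MeasureTheory Matrix Polynomial
open scoped BigOperators

/-- `p̄₀ = 1`, `p̄ᵢ(τ) = ∫₀^τ p_{i-1}(σ) dσ`. -/
noncomputable def pbarEval (p : ℕ → Polynomial ℝ) : ℕ → ℝ → ℝ
  | 0, _ => 1
  | i + 1, τ => ∫ s in (0:ℝ)..τ, (p i).eval s

/-- A quadrature rule on `[0,1]` with nodes `0 ≤ σ₁ < … < σ_M ≤ 1` and positive weights,
exact for all polynomials of degree `≤ d`. -/
def IsQuad {M : ℕ} (σ γ : Fin M → ℝ) (d : ℕ) : Prop :=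
  (∀ i, σ i ∈ Set.Icc (0:ℝ) 1) ∧ StrictMono σ ∧ (∀ i, 0 < γ i) ∧
    ∀ q : Polynomial ℝ, q.natDegree ≤ d →
      ∑ i, γ i * q.eval (σ i) = ∫ s in (0:ℝ)..1, q.eval s

/-- Row/column index type for the block matrix `𝒰` (also the index type of coefficient
vectors `c`): block `j`, then either a "differential" index `(κ, l)` with `l : Fin (N+1)`
or an "algebraic" index with `l : Fin N`. -/
abbrev UIdx (N m k n : ℕ) := Fin n × (Fin k × Fin (N + 1) ⊕ Fin (m - k) × Fin N)

/-- Row index type for `𝒰̂`: in each differential block the rows of `h^{3/2}Γ̄V̄`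
are stacked above the rows of `h^{1/2}Γ̄V̊`. -/
abbrev UhIdx (N m k n : ℕ) := Fin n × (Fin k × (Fin (N + 1) ⊕ Fin (N + 1)) ⊕ Fin (m - k) × Fin N)

/-- `𝒰 = blockdiag(U₁,…,U_n)`, `U_j = blockdiag(I_k ⊗ h_j^{3/2}Γ̄V̄, I_{m-k} ⊗ h_j^{1/2}ΓV)`. -/
noncomputable def Umat (N m k n : ℕ) (p : ℕ → Polynomial ℝ) (h : Fin n → ℝ)
    (σ γ : Fin N → ℝ) (σb γb : Fin (N + 1) → ℝ) :
    Matrix (UIdx N m k n) (UIdx N m k n) ℝ :=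
  Matrix.of fun x y =>
    match x, y with
    | (j, Sum.inl (κ, i)), (j', Sum.inl (κ', α)) =>
        if j = j' ∧ κ = κ' then
          h j ^ ((3:ℝ)/2) * Real.sqrt (γb i) * pbarEval p (α : ℕ) (σb i) else 0
    | (j, Sum.inr (κ, i)), (j', Sum.inr (κ', α)) =>
        if j = j' ∧ κ = κ' then
          h j ^ ((1:ℝ)/2) * Real.sqrt (γ i) * (p (α : ℕ)).eval (σ i) else 0
    | _, _ => 0

/-- `𝒰̂ = blockdiag(Û₁,…,Û_n)`, where `Û_j` has the blocks `h_j^{3/2}Γ̄V̄` stacked above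
`h_j^{1/2}Γ̄V̊` in the differential part (`V̊_{iα} = p̄'_{α-1}(σ̄ᵢ)`), and
`I_{m-k} ⊗ h_j^{1/2}ΓV` in the algebraic part. -/
noncomputable def Uhmat (N m k n : ℕ) (p : ℕ → Polynomial ℝ) (h : Fin n → ℝ)
    (σ γ : Fin N → ℝ) (σb γb : Fin (N + 1) → ℝ) :
    Matrix (UhIdx N m k n) (UIdx N m k n) ℝ :=
  Matrix.of fun x y =>
    match x, y with
    | (j, Sum.inl (κ, Sum.inl i)), (j', Sum.inl (κ', α)) =>
        if j = j' ∧ κ = κ' then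
          h j ^ ((3:ℝ)/2) * Real.sqrt (γb i) * pbarEval p (α : ℕ) (σb i) else 0
    | (j, Sum.inl (κ, Sum.inr i)), (j', Sum.inl (κ', α)) =>
        if j = j' ∧ κ = κ' then
          h j ^ ((1:ℝ)/2) * Real.sqrt (γb i) * deriv (pbarEval p (α : ℕ)) (σb i) else 0
    | (j, Sum.inr (κ, i)), (j', Sum.inr (κ', α)) =>
        if j = j' ∧ κ = κ' then
          h j ^ ((1:ℝ)/2) * Real.sqrt (γ i) * (p (α : ℕ)).eval (σ i) else 0
    | _, _ => 0

/-- The differential components (`κ = 1,…,k`) of `x = ℛc` on the subinterval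
`[t_{j-1}, t_j)`:  `x_κ(s) = Σ_{l=0}^{N} c_{jκl} · h_j · p̄_l((s - t_{j-1})/h_j)`. -/
noncomputable def xdiff (N m k n : ℕ) (p : ℕ → Polynomial ℝ) (t : ℕ → ℝ)
    (c : UIdx N m k n → ℝ) (j : Fin n) (κ : Fin k) (s : ℝ) : ℝ :=
  ∑ l : Fin (N + 1), c (j, Sum.inl (κ, l)) *
    ((t ((j : ℕ) + 1) - t (j : ℕ)) *
      pbarEval p (l : ℕ) ((s - t (j : ℕ)) / (t ((j : ℕ) + 1) - t (j : ℕ))))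

/-- The algebraic components (`κ = k+1,…,m`) of `x = ℛc` on the subinterval
`[t_{j-1}, t_j)`:  `x_κ(s) = Σ_{l=0}^{N-1} c_{jκl} · p_l((s - t_{j-1})/h_j)`. -/
noncomputable def xalg (N m k n : ℕ) (p : ℕ → Polynomial ℝ) (t : ℕ → ℝ)
    (c : UIdx N m k n → ℝ) (j : Fin n) (κ : Fin (m - k)) (s : ℝ) : ℝ :=
  ∑ l : Fin N, c (j, Sum.inr (κ, l)) *
    (p (l : ℕ)).eval ((s - t (j : ℕ)) / (t ((j : ℕ) + 1) - t (j : ℕ)))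

/-- `‖ℛc‖²_{L²}`. -/
noncomputable def normL2sq (N m k n : ℕ) (p : ℕ → Polynomial ℝ) (t : ℕ → ℝ)
    (c : UIdx N m k n → ℝ) : ℝ :=
  ∑ j : Fin n,
    ((∑ κ : Fin k, ∫ s in t (j : ℕ)..t ((j : ℕ) + 1), (xdiff N m k n p t c j κ s) ^ 2) +
     ∑ κ : Fin (m - k), ∫ s in t (j : ℕ)..t ((j : ℕ) + 1), (xalg N m k n p t c j κ s) ^ 2)

/-- `‖ℛc‖²_{H¹_{D,π}}` (with piecewise derivatives of the differential components). -/
noncomputable def normH1sq (N m k n : ℕ) (p : ℕ → Polynomial ℝ) (t : ℕ → ℝ)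
    (c : UIdx N m k n → ℝ) : ℝ :=
  ∑ j : Fin n,
    ((∑ κ : Fin k, ∫ s in t (j : ℕ)..t ((j : ℕ) + 1),
        ((xdiff N m k n p t c j κ s) ^ 2 + (deriv (xdiff N m k n p t c j κ) s) ^ 2)) +
     ∑ κ : Fin (m - k), ∫ s in t (j : ℕ)..t ((j : ℕ) + 1), (xalg N m k n p t c j κ s) ^ 2)

/-- `V_{iα} = p_{α-1}(σᵢ)`. -/
noncomputable def Vmat (N : ℕ) (p : ℕ → Polynomial ℝ) (σ : Fin N → ℝ) :
    Matrix (Fin N) (Fin N) ℝ :=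
  Matrix.of fun i α => (p (α : ℕ)).eval (σ i)

/-- `V̄_{iα} = p̄_{α-1}(σ̄ᵢ)`. -/
noncomputable def Vbmat (N : ℕ) (p : ℕ → Polynomial ℝ) (σb : Fin (N + 1) → ℝ) :
    Matrix (Fin (N + 1)) (Fin (N + 1)) ℝ :=
  Matrix.of fun i α => pbarEval p (α : ℕ) (σb i)

/-- `Γ = diag(γᵢ^{1/2})`. -/
noncomputable def Gmat {M : ℕ} (γ : Fin M → ℝ) : Matrix (Fin M) (Fin M) ℝ :=
  Matrix.diagonal fun i => Real.sqrt (γ i)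

/-- `s` is a singular value of `A`: `s ≥ 0` and `s²` is an eigenvalue of `AᵀA`. -/
def IsSingVal {I J : Type} [Fintype I] [Fintype J] (A : Matrix I J ℝ) (s : ℝ) : Prop :=
  0 ≤ s ∧ ∃ v : J → ℝ, v ≠ 0 ∧ (Aᵀ * A).mulVec v = s ^ 2 • v

/-- Euclidean norm of a coefficient vector. -/
noncomputable def enormU {N m k n : ℕ} (c : UIdx N m k n → ℝ) : ℝ :=
  Real.sqrt (∑ i, c i ^ 2)

/-!
After rescaling each subinterval to `[0, 1]`, the exactness of the two quadratures turns
`‖ℛc‖²_{L²}` into a block-diagonal quadratic form in `c`: the differential blocks contribute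
`h³ |Γ̄V̄ v|²`, the algebraic ones `h |ΓV w|²`. The extreme values of its quotient by `|c|²` are
therefore the extreme values of `h³ s²` and `h s²` over the singular values `s` of `Γ̄V̄` and `ΓV`
respectively, and `h σ_max(Γ̄V̄) ≤ σ_min(ΓV)` makes the algebraic blocks responsible for the maximum
and the differential ones for the minimum. The `H¹` norm adds `h |ΓV v'|²` per differential block,
where `v'` drops the coefficient of `p̄₀ = 1`; this term vanishes when the differential components
are piecewise constant, which gives the lower bound for the inverse of `ℛ`.
-/

section SupOfQuotients

lemma sqrt_div_sqrt_le {x y M : ℝ} (hM : 0 ≤ M) (hxy : x ≤ M ^ 2 * y) : √x / √y ≤ M := by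
  refine div_le_of_le_mul₀ (Real.sqrt_nonneg y) hM ?_
  calc √x ≤ √(M ^ 2 * y) := Real.sqrt_le_sqrt hxy
    _ = M * √y := by rw [Real.sqrt_mul (sq_nonneg M), Real.sqrt_sq hM]

variable {E : Type*} [Zero E] {F G : E → ℝ} {K M : ℝ}

lemma sSup_sqrt_div_sqrt_le (hM : 0 ≤ M) (hFG : ∀ c, F c ≤ M ^ 2 * G c) :
    sSup {r : ℝ | ∃ c, c ≠ 0 ∧ r = √(F c) / √(G c)} ≤ M := by
  refine Real.sSup_le ?_ hM
  rintro _ ⟨c, -, rfl⟩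
  exact sqrt_div_sqrt_le hM (hFG c)

lemma le_sSup_sqrt_div_sqrt (hK : 0 ≤ K) (hFG : ∀ c, F c ≤ K ^ 2 * G c)
    {c : E} (hc : c ≠ 0) (hG : 0 < G c) (hM : M ^ 2 * G c ≤ F c) :
    M ≤ sSup {r : ℝ | ∃ c, c ≠ 0 ∧ r = √(F c) / √(G c)} := by
  have hbdd : BddAbove {r : ℝ | ∃ c, c ≠ 0 ∧ r = √(F c) / √(G c)} := by
    refine ⟨K, ?_⟩
    rintro _ ⟨d, -, rfl⟩
    exact sqrt_div_sqrt_le hK (hFG d)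
  refine le_csSup_of_le hbdd ⟨c, hc, rfl⟩ ?_
  rw [le_div_iff₀ (Real.sqrt_pos.mpr hG)]
  refine Real.le_sqrt_of_sq_le ?_
  rwa [mul_pow, Real.sq_sqrt hG.le]

lemma le_inv_sq_mul_iff {x y : ℝ} (hM : 0 < M) : x ≤ M⁻¹ ^ 2 * y ↔ M ^ 2 * x ≤ y := by
  rw [inv_pow, le_inv_mul_iff₀ (pow_pos hM 2)]

lemma sSup_sqrt_div_sqrt_le_inv (hM : 0 < M) (hFG : ∀ c, M ^ 2 * F c ≤ G c) :
    sSup {r : ℝ | ∃ c, c ≠ 0 ∧ r = √(F c) / √(G c)} ≤ M⁻¹ :=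
  sSup_sqrt_div_sqrt_le (inv_nonneg.mpr hM.le) fun c => (le_inv_sq_mul_iff hM).mpr (hFG c)

lemma inv_le_sSup_sqrt_div_sqrt (hK : 0 < K) (hFG : ∀ c, K ^ 2 * F c ≤ G c) (hM : 0 < M)
    {c : E} (hc : c ≠ 0) (hF : 0 < F c) (hGF : G c ≤ M ^ 2 * F c) :
    M⁻¹ ≤ sSup {r : ℝ | ∃ c, c ≠ 0 ∧ r = √(F c) / √(G c)} := by
  refine le_sSup_sqrt_div_sqrt (inv_nonneg.mpr hK.le)
    (fun c => (le_inv_sq_mul_iff hK).mpr (hFG c)) hc ?_ ?_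
  · exact (mul_pos (pow_pos hK 2) hF).trans_le (hFG c)
  · rwa [inv_pow, inv_mul_le_iff₀ (pow_pos hM 2)]

end SupOfQuotients

section SquaredNorms

variable {I J : Type*} [Fintype I] [Fintype J]

lemma dotProduct_self_nonneg (v : J → ℝ) : 0 ≤ v ⬝ᵥ v := by
  simpa only [star_trivial] using dotProduct_self_star_nonneg v

lemma dotProduct_self_pos {v : J → ℝ} (hv : v ≠ 0) : 0 < v ⬝ᵥ v := by
  simpa only [star_trivial] using dotProduct_self_star_pos_iff.mpr hv

/-- The squared Euclidean norm `|A v|²`. -/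
def mulVecNormSq (A : Matrix I J ℝ) (v : J → ℝ) : ℝ :=
  (A *ᵥ v) ⬝ᵥ (A *ᵥ v)

lemma mulVecNormSq_nonneg (A : Matrix I J ℝ) (v : J → ℝ) : 0 ≤ mulVecNormSq A v :=
  dotProduct_self_nonneg _

@[simp]
lemma mulVecNormSq_zero (A : Matrix I J ℝ) : mulVecNormSq A 0 = 0 := by
  simp [mulVecNormSq]

lemma mulVecNormSq_eq_dotProduct (A : Matrix I J ℝ) (v : J → ℝ) :
    mulVecNormSq A v = v ⬝ᵥ (Aᵀ * A) *ᵥ v := by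
  rw [mulVecNormSq, ← mulVec_mulVec, dotProduct_mulVec v, vecMul_transpose]

lemma mulVecNormSq_of_mulVec_eq {A : Matrix I J ℝ} {v : J → ℝ} {μ : ℝ}
    (hv : (Aᵀ * A) *ᵥ v = μ • v) : mulVecNormSq A v = μ * (v ⬝ᵥ v) := by
  rw [mulVecNormSq_eq_dotProduct, hv, dotProduct_smul, smul_eq_mul]

end SquaredNorms

section SingularValues

lemma isSelfAdjoint_transpose_mul_self {I J : Type*} [Fintype I] (A : Matrix I J ℝ) :
    IsSelfAdjoint (Aᵀ * A) :=
  isHermitian_conjTranspose_mul_self A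

variable {I J : Type} [Fintype I] [Fintype J] {A : Matrix I J ℝ} {s : ℝ}

lemma IsSingVal.exists_mulVecNormSq_eq (hs : IsSingVal A s) :
    ∃ v ≠ 0, mulVecNormSq A v = s ^ 2 * (v ⬝ᵥ v) :=
  let ⟨v, hv, hAv⟩ := hs.2
  ⟨v, hv, mulVecNormSq_of_mulVec_eq hAv⟩

lemma IsSingVal.pos_of_injective (hs : IsSingVal A s)
    (hA : Function.Injective fun v => A *ᵥ v) : 0 < s := by
  obtain ⟨v, hv, hAv⟩ := hs.exists_mulVecNormSq_eq
  have hAv_ne : A *ᵥ v ≠ 0 := fun h0 => hv (hA (h0.trans (mulVec_zero A).symm))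
  refine hs.1.lt_of_ne' fun h0 => (dotProduct_self_pos hAv_ne).ne' ?_
  rw [← mulVecNormSq, hAv, h0, zero_pow two_ne_zero, zero_mul]

lemma exists_isSingVal_sq_eq_of_mem_spectrum [DecidableEq J] {μ : ℝ}
    (hμ : μ ∈ spectrum ℝ (Aᵀ * A)) :
    ∃ s, IsSingVal A s ∧ s ^ 2 = μ := by
  rw [← spectrum_toLin', ← Module.End.hasEigenvalue_iff_mem_spectrum] at hμ
  obtain ⟨v, hv⟩ := hμ.exists_hasEigenvector
  have hAv : (Aᵀ * A) *ᵥ v = μ • v := by simpa only [toLin'_apply] using hv.apply_eq_smul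
  have hμ_nonneg : 0 ≤ μ := by
    refine nonneg_of_mul_nonneg_left ?_ (dotProduct_self_pos hv.2)
    exact mulVecNormSq_of_mulVec_eq hAv ▸ mulVecNormSq_nonneg A v
  have hsq := Real.sq_sqrt hμ_nonneg
  exact ⟨√μ, ⟨Real.sqrt_nonneg μ, v, hv.2, hsq.symm ▸ hAv⟩, hsq⟩

open scoped MatrixOrder in
lemma mulVecNormSq_le_of_isGreatest (hs : IsGreatest {s | IsSingVal A s} s) (v : J → ℝ) :
    mulVecNormSq A v ≤ s ^ 2 * (v ⬝ᵥ v) := by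
  classical
  have hle : Aᵀ * A ≤ algebraMap ℝ _ (s ^ 2) := by
    refine (le_algebraMap_iff_spectrum_le (isSelfAdjoint_transpose_mul_self A)).mpr fun μ hμ => ?_
    obtain ⟨r, hr, rfl⟩ := exists_isSingVal_sq_eq_of_mem_spectrum hμ
    exact pow_le_pow_left₀ hr.1 (hs.2 hr) 2
  rw [Algebra.algebraMap_eq_smul_one] at hle
  have hdiff := (Matrix.le_iff.mp hle).dotProduct_mulVec_nonneg v
  rw [mulVecNormSq_eq_dotProduct]
  simpa [sub_mulVec, dotProduct_sub, smul_mulVec] using hdiff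

open scoped MatrixOrder in
lemma le_mulVecNormSq_of_isLeast (hs : IsLeast {s | IsSingVal A s} s) (v : J → ℝ) :
    s ^ 2 * (v ⬝ᵥ v) ≤ mulVecNormSq A v := by
  classical
  have hle : algebraMap ℝ _ (s ^ 2) ≤ Aᵀ * A := by
    refine (algebraMap_le_iff_le_spectrum (isSelfAdjoint_transpose_mul_self A)).mpr fun μ hμ => ?_
    obtain ⟨r, hr, rfl⟩ := exists_isSingVal_sq_eq_of_mem_spectrum hμ
    exact pow_le_pow_left₀ hs.1.1 (hs.2 hr) 2
  rw [Algebra.algebraMap_eq_smul_one] at hle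
  have hdiff := (Matrix.le_iff.mp hle).dotProduct_mulVec_nonneg v
  rw [mulVecNormSq_eq_dotProduct]
  simpa [sub_mulVec, dotProduct_sub, smul_mulVec] using hdiff

end SingularValues

section Antiderivative

/-- The antiderivative of a polynomial that vanishes at `0`; it realises `∫₀^τ q` algebraically. -/
noncomputable def antiderivative {K : Type*} [Field K] (q : K[X]) : K[X] :=
  q.sum fun i a => monomial (i + 1) (a / (i + 1))

lemma derivative_antiderivative {K : Type*} [Field K] [CharZero K] (q : K[X]) :
    derivative (antiderivative q) = q := by
  conv_rhs => rw [← q.sum_monomial_eq]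
  simp only [antiderivative, Polynomial.sum, derivative_sum, derivative_monomial,
    Nat.add_sub_cancel, Nat.cast_add_one]
  exact Finset.sum_congr rfl fun i _ => by rw [div_mul_cancel₀ _ (Nat.cast_add_one_ne_zero i)]

lemma eval_zero_antiderivative {K : Type*} [Field K] (q : K[X]) :
    (antiderivative q).eval 0 = 0 := by
  simp [antiderivative, Polynomial.sum, eval_finsetSum]

lemma natDegree_antiderivative_le {K : Type*} [Field K] (q : K[X]) :
    (antiderivative q).natDegree ≤ q.natDegree + 1 :=
  natDegree_sum_le_of_forall_le _ _ fun i hi =>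
    (natDegree_monomial_le _).trans (Nat.succ_le_succ (le_natDegree_of_mem_supp i hi))

lemma eval_antiderivative (q : ℝ[X]) (τ : ℝ) :
    (antiderivative q).eval τ = ∫ s in (0 : ℝ)..τ, q.eval s := by
  have hderiv (s : ℝ) : HasDerivAt (fun s => (antiderivative q).eval s) (q.eval s) s := by
    simpa only [derivative_antiderivative] using (antiderivative q).hasDerivAt s
  rw [intervalIntegral.integral_eq_sub_of_hasDerivAt (fun s _ => hderiv s)
    (q.continuous.intervalIntegrable _ _), eval_zero_antiderivative, sub_zero]

/-- The functions `p̄ᵢ` of `pbarEval` as polynomials. -/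
noncomputable def pbarPoly (p : ℕ → ℝ[X]) : ℕ → ℝ[X]
  | 0 => 1
  | i + 1 => antiderivative (p i)

lemma eval_pbarPoly (p : ℕ → ℝ[X]) (i : ℕ) (τ : ℝ) : (pbarPoly p i).eval τ = pbarEval p i τ := by
  cases i with
  | zero => exact eval_one
  | succ i => exact eval_antiderivative (p i) τ

lemma natDegree_pbarPoly_le {p : ℕ → ℝ[X]} {N : ℕ} (hdeg : ∀ i < N, (p i).natDegree ≤ N - 1)
    (l : Fin (N + 1)) : (pbarPoly p l).natDegree ≤ N := by
  cases l using Fin.cases with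
  | zero => simp [pbarPoly]
  | succ i =>
    have := hdeg i i.isLt
    have := natDegree_antiderivative_le (p i)
    simp only [Fin.val_succ, pbarPoly]
    lia

lemma linearIndependent_pbarPoly {p : ℕ → ℝ[X]} {N : ℕ}
    (hli : LinearIndependent ℝ fun i : Fin N => p i) :
    LinearIndependent ℝ fun l : Fin (N + 1) => pbarPoly p l := by
  refine linearIndependent_finSucc.mpr ⟨LinearIndependent.of_comp derivative ?_, fun hmem => ?_⟩
  · simpa only [Function.comp_def, Fin.tail, Fin.val_succ, pbarPoly, derivative_antiderivative]
      using hli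
  · have hspan : Submodule.span ℝ (Set.range (Fin.tail fun l : Fin (N + 1) => pbarPoly p l)) ≤
        LinearMap.ker (leval (0 : ℝ)) := by
      rw [Submodule.span_le]
      rintro _ ⟨i, rfl⟩
      exact eval_zero_antiderivative (p i)
    simpa [pbarPoly] using hspan hmem

lemma derivative_sum_smul_pbarPoly (p : ℕ → ℝ[X]) {N : ℕ} (v : Fin (N + 1) → ℝ) :
    derivative (∑ l, v l • pbarPoly p l) = ∑ l : Fin N, Fin.tail v l • p l := by
  simp [Fin.sum_univ_succ, pbarPoly, derivative_antiderivative, Fin.tail]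

end Antiderivative

section Collocation

variable {ι : Type*} [Fintype ι] {M : ℕ} {σ γ : Fin M → ℝ} {P : ι → ℝ[X]}

/-- The matrix `(γᵢ^{1/2} P_l(σᵢ))_{i,l}`, of which `ΓV` and `Γ̄V̄` are the two instances. -/
noncomputable def weightedCollocation (σ γ : Fin M → ℝ) (P : ι → ℝ[X]) : Matrix (Fin M) ι ℝ :=
  Gmat γ * Matrix.of fun i l => (P l).eval (σ i)

lemma weightedCollocation_mulVec (σ γ : Fin M → ℝ) (P : ι → ℝ[X]) (v : ι → ℝ) (i : Fin M) :
    (weightedCollocation σ γ P *ᵥ v) i = √(γ i) * (∑ l, v l • P l).eval (σ i) := by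
  rw [weightedCollocation, Gmat, ← mulVec_mulVec, mulVec_diagonal]
  simp [mulVec, dotProduct, eval_finsetSum, mul_comm]

lemma weightedCollocation_mulVec_injective (hσ : Function.Injective σ) (hγ : ∀ i, 0 < γ i)
    (hP : LinearIndependent ℝ P) (hdeg : ∀ l, (P l).natDegree < M) :
    Function.Injective fun v => weightedCollocation σ γ P *ᵥ v := by
  refine (injective_iff_map_eq_zero (weightedCollocation σ γ P).mulVecLin).mpr fun v hv => ?_
  have hroot (i : Fin M) : (∑ l, v l • P l).eval (σ i) = 0 := by
    have hi := congrFun hv i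
    rw [mulVecLin_apply, weightedCollocation_mulVec] at hi
    exact (mul_eq_zero.mp hi).resolve_left (Real.sqrt_pos.mpr (hγ i)).ne'
  rcases isEmpty_or_nonempty ι with _ | ⟨⟨l₀⟩⟩
  · exact Subsingleton.elim _ _
  have hsum_deg : (∑ l, v l • P l).natDegree < Fintype.card (Fin M) := by
    rw [Fintype.card_fin]
    refine Nat.lt_of_le_pred (Nat.zero_lt_of_lt (hdeg l₀)) ?_
    exact natDegree_sum_le_of_forall_le _ _ fun l _ =>
      (natDegree_smul_le _ _).trans (Nat.le_pred_of_lt (hdeg l))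
  exact funext <| Fintype.linearIndependent_iff.mp hP v
    (eq_zero_of_natDegree_lt_card_of_eval_eq_zero _ hσ hroot hsum_deg)

lemma IsSingVal.pos_of_weightedCollocation {ι : Type} [Fintype ι] {P : ι → ℝ[X]} {d : ℕ} {s : ℝ}
    (hs : IsSingVal (weightedCollocation σ γ P) s) (hq : IsQuad σ γ d)
    (hP : LinearIndependent ℝ P) (hdeg : ∀ l, (P l).natDegree < M) : 0 < s :=
  hs.pos_of_injective (weightedCollocation_mulVec_injective hq.2.1.injective hq.2.2.1 hP hdeg)

lemma IsQuad.mulVecNormSq_weightedCollocation {d : ℕ} (hq : IsQuad σ γ (2 * d))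
    (hdeg : ∀ l, (P l).natDegree ≤ d) (v : ι → ℝ) :
    mulVecNormSq (weightedCollocation σ γ P) v =
      ∫ s in (0 : ℝ)..1, (∑ l, v l • P l).eval s ^ 2 := by
  obtain ⟨-, -, hγ, hexact⟩ := hq
  have hsum_deg : (∑ l, v l • P l).natDegree ≤ d :=
    natDegree_sum_le_of_forall_le _ _ fun l _ => (natDegree_smul_le _ _).trans (hdeg l)
  have hquad := hexact ((∑ l, v l • P l) ^ 2) (natDegree_pow_le_of_le 2 hsum_deg)
  simp only [eval_pow] at hquad
  rw [← hquad, mulVecNormSq, dotProduct]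
  refine Finset.sum_congr rfl fun i _ => ?_
  rw [weightedCollocation_mulVec, mul_mul_mul_comm, Real.mul_self_sqrt (hγ i).le, sq]

lemma Gmat_mul_Vmat {N : ℕ} (p : ℕ → ℝ[X]) (σ γ : Fin N → ℝ) :
    Gmat γ * Vmat N p σ = weightedCollocation σ γ fun l : Fin N => p l :=
  rfl

lemma Gmat_mul_Vbmat {N : ℕ} (p : ℕ → ℝ[X]) (σb γb : Fin (N + 1) → ℝ) :
    Gmat γb * Vbmat N p σb = weightedCollocation σb γb fun l : Fin (N + 1) => pbarPoly p l := by
  simp only [Vbmat, weightedCollocation, eval_pbarPoly]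

end Collocation

section Blocks

variable {N m k n : ℕ}

/-- The coefficients of the differential component `κ` on the subinterval `j`. -/
def diffCoeff (c : UIdx N m k n → ℝ) (j : Fin n) (κ : Fin k) : Fin (N + 1) → ℝ :=
  fun l => c (j, Sum.inl (κ, l))

/-- The coefficients of the algebraic component `κ` on the subinterval `j`. -/
def algCoeff (c : UIdx N m k n → ℝ) (j : Fin n) (κ : Fin (m - k)) : Fin N → ℝ :=
  fun l => c (j, Sum.inr (κ, l))

lemma enormU_eq_sqrt_dotProduct (c : UIdx N m k n → ℝ) : enormU c = √(c ⬝ᵥ c) := by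
  simp only [enormU, dotProduct, sq]

/-- The sum of `f` over all differential and of `g` over all algebraic coefficient blocks of `c`:
the shape of every block-diagonal quadratic form in `c`. -/
def blockSum (f : (Fin (N + 1) → ℝ) → ℝ) (g : (Fin N → ℝ) → ℝ) (c : UIdx N m k n → ℝ) : ℝ :=
  ∑ j, ((∑ κ, f (diffCoeff c j κ)) + ∑ κ, g (algCoeff c j κ))

variable {f f' : (Fin (N + 1) → ℝ) → ℝ} {g g' : (Fin N → ℝ) → ℝ}

lemma blockSum_mono (hf : ∀ v, f v ≤ f' v) (hg : ∀ w, g w ≤ g' w) (c : UIdx N m k n → ℝ) :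
    blockSum f g c ≤ blockSum f' g' c :=
  Finset.sum_le_sum fun _ _ => add_le_add
    (Finset.sum_le_sum fun _ _ => hf _) (Finset.sum_le_sum fun _ _ => hg _)

lemma mul_dotProduct_self_eq_blockSum (μ : ℝ) (c : UIdx N m k n → ℝ) :
    μ * (c ⬝ᵥ c) = blockSum (fun v => μ * (v ⬝ᵥ v)) (fun w => μ * (w ⬝ᵥ w)) c := by
  simp only [blockSum, ← Finset.mul_sum, ← mul_add, dotProduct, Fintype.sum_prod_type,
    Fintype.sum_sum_type, diffCoeff, algCoeff]

/-- The coefficient vector all of whose differential blocks are `v` and algebraic blocks are `w`. -/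
def replicateBlocks (v : Fin (N + 1) → ℝ) (w : Fin N → ℝ) : UIdx N m k n → ℝ :=
  fun i => Sum.elim (fun x => v x.2) (fun x => w x.2) i.2

@[simp]
lemma diffCoeff_replicateBlocks (v : Fin (N + 1) → ℝ) (w : Fin N → ℝ) (j : Fin n) (κ : Fin k) :
    diffCoeff (replicateBlocks v w : UIdx N m k n → ℝ) j κ = v :=
  rfl

@[simp]
lemma algCoeff_replicateBlocks (v : Fin (N + 1) → ℝ) (w : Fin N → ℝ) (j : Fin n)
    (κ : Fin (m - k)) : algCoeff (replicateBlocks v w : UIdx N m k n → ℝ) j κ = w :=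
  rfl

lemma blockSum_replicateBlocks (v : Fin (N + 1) → ℝ) (w : Fin N → ℝ) :
    blockSum f g (replicateBlocks v w : UIdx N m k n → ℝ) =
      n * (k * f v + (m - k : ℕ) * g w) := by
  simp [blockSum, mul_add]

lemma exists_blockSum_eq_of_diff (hn : 0 < n) (hk : 0 < k) {v : Fin (N + 1) → ℝ} (hv : v ≠ 0)
    {μ : ℝ} (hf : f v = μ * (v ⬝ᵥ v)) (hg : g 0 = 0) :
    ∃ c : UIdx N m k n → ℝ, c ≠ 0 ∧ blockSum f g c = μ * (c ⬝ᵥ c) := by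
  refine ⟨replicateBlocks v 0, fun h0 => hv (funext fun l => ?_), ?_⟩
  · exact congrFun h0 (⟨0, hn⟩, Sum.inl (⟨0, hk⟩, l))
  · rw [mul_dotProduct_self_eq_blockSum, blockSum_replicateBlocks, blockSum_replicateBlocks]
    simp only [hf, hg, dotProduct_zero, mul_zero]

lemma exists_blockSum_eq_of_alg (hn : 0 < n) (hkm : k < m) {w : Fin N → ℝ} (hw : w ≠ 0)
    {μ : ℝ} (hf : f 0 = 0) (hg : g w = μ * (w ⬝ᵥ w)) :
    ∃ c : UIdx N m k n → ℝ, c ≠ 0 ∧ blockSum f g c = μ * (c ⬝ᵥ c) := by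
  refine ⟨replicateBlocks 0 w, fun h0 => hw (funext fun l => ?_), ?_⟩
  · exact congrFun h0 (⟨0, hn⟩, Sum.inr (⟨0, Nat.sub_pos_of_lt hkm⟩, l))
  · rw [mul_dotProduct_self_eq_blockSum, blockSum_replicateBlocks, blockSum_replicateBlocks]
    simp only [hf, hg, dotProduct_zero, mul_zero]

end Blocks

section CoordinateNorms

variable {N m k n : ℕ} {I J : Type} [Fintype I] [Fintype J]
  {A : Matrix I (Fin N) ℝ} {B : Matrix J (Fin (N + 1)) ℝ} {h a b : ℝ}

/-- `‖ℛc‖²_{L²}` in terms of the coefficients, where `A = ΓV` and `B = Γ̄V̄`. -/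
noncomputable def coordL2Sq (h : ℝ) (A : Matrix I (Fin N) ℝ) (B : Matrix J (Fin (N + 1)) ℝ)
    (c : UIdx N m k n → ℝ) : ℝ :=
  blockSum (fun v => h ^ 3 * mulVecNormSq B v) (fun w => h * mulVecNormSq A w) c

/-- `‖ℛc‖²_{H¹_{D,π}}` in terms of the coefficients, where `A = ΓV` and `B = Γ̄V̄`: differentiation
turns `h p̄₀, …, h p̄_N` into `0, p₀, …, p_{N-1}`, whence the tail of `v`. -/
noncomputable def coordH1Sq (h : ℝ) (A : Matrix I (Fin N) ℝ) (B : Matrix J (Fin (N + 1)) ℝ)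
    (c : UIdx N m k n → ℝ) : ℝ :=
  blockSum (fun v => h ^ 3 * mulVecNormSq B v + h * mulVecNormSq A (Fin.tail v))
    (fun w => h * mulVecNormSq A w) c

lemma coordL2Sq_le_coordH1Sq (hh : 0 ≤ h) (c : UIdx N m k n → ℝ) :
    coordL2Sq h A B c ≤ coordH1Sq h A B c :=
  blockSum_mono
    (fun v => le_add_of_nonneg_right (mul_nonneg hh (mulVecNormSq_nonneg A (Fin.tail v))))
    (fun _ => le_rfl) c

lemma sq_sqrt_mul (hh : 0 ≤ h) (x : ℝ) : (√h * x) ^ 2 = h * x ^ 2 := by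
  rw [mul_pow, Real.sq_sqrt hh]

lemma coordL2Sq_le (hh : 0 ≤ h) (ha : IsGreatest {s | IsSingVal A s} a)
    (hb : IsGreatest {s | IsSingVal B s} b) (c : UIdx N m k n → ℝ) :
    coordL2Sq h A B c ≤ (√h * max a (h * b)) ^ 2 * (c ⬝ᵥ c) := by
  have ha₀ : 0 ≤ a := ha.1.1
  have hb₀ : 0 ≤ b := hb.1.1
  rw [mul_dotProduct_self_eq_blockSum, sq_sqrt_mul hh]
  refine blockSum_mono (fun v => ?_) (fun w => ?_) c
  · calc h ^ 3 * mulVecNormSq B v ≤ h ^ 3 * (b ^ 2 * (v ⬝ᵥ v)) := by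
          gcongr
          exact mulVecNormSq_le_of_isGreatest hb v
      _ = h * (h * b) ^ 2 * (v ⬝ᵥ v) := by ring
      _ ≤ h * max a (h * b) ^ 2 * (v ⬝ᵥ v) := by
          have := dotProduct_self_nonneg v
          gcongr
          exact le_max_right _ _
  · calc h * mulVecNormSq A w ≤ h * (a ^ 2 * (w ⬝ᵥ w)) := by
          gcongr
          exact mulVecNormSq_le_of_isGreatest ha w
      _ = h * a ^ 2 * (w ⬝ᵥ w) := by ring
      _ ≤ h * max a (h * b) ^ 2 * (w ⬝ᵥ w) := by
          have := dotProduct_self_nonneg w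
          gcongr
          exact le_max_left _ _

lemma le_coordL2Sq (hh : 0 ≤ h) (ha : IsLeast {s | IsSingVal A s} a)
    (hb : IsLeast {s | IsSingVal B s} b) (c : UIdx N m k n → ℝ) :
    (√h * min a (h * b)) ^ 2 * (c ⬝ᵥ c) ≤ coordL2Sq h A B c := by
  have ha₀ : 0 ≤ a := ha.1.1
  have hb₀ : 0 ≤ b := hb.1.1
  have hmin : 0 ≤ min a (h * b) := le_min ha₀ (mul_nonneg hh hb₀)
  rw [mul_dotProduct_self_eq_blockSum, sq_sqrt_mul hh]
  refine blockSum_mono (fun v => ?_) (fun w => ?_) c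
  · calc h * min a (h * b) ^ 2 * (v ⬝ᵥ v) ≤ h * (h * b) ^ 2 * (v ⬝ᵥ v) := by
          have := dotProduct_self_nonneg v
          gcongr h * ?_ * _
          exact pow_le_pow_left₀ hmin (min_le_right _ _) 2
      _ = h ^ 3 * (b ^ 2 * (v ⬝ᵥ v)) := by ring
      _ ≤ h ^ 3 * mulVecNormSq B v := by
          gcongr
          exact le_mulVecNormSq_of_isLeast hb v
  · calc h * min a (h * b) ^ 2 * (w ⬝ᵥ w) ≤ h * a ^ 2 * (w ⬝ᵥ w) := by
          have := dotProduct_self_nonneg w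
          gcongr h * ?_ * _
          exact pow_le_pow_left₀ hmin (min_le_left _ _) 2
      _ = h * (a ^ 2 * (w ⬝ᵥ w)) := by ring
      _ ≤ h * mulVecNormSq A w := by
          gcongr
          exact le_mulVecNormSq_of_isLeast ha w

lemma exists_coordL2Sq_eq_of_alg (hn : 0 < n) (hkm : k < m) (hh : 0 ≤ h) (ha : IsSingVal A a) :
    ∃ c : UIdx N m k n → ℝ, c ≠ 0 ∧ coordL2Sq h A B c = (√h * a) ^ 2 * (c ⬝ᵥ c) := by
  obtain ⟨w, hw, hAw⟩ := ha.exists_mulVecNormSq_eq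
  refine exists_blockSum_eq_of_alg hn hkm hw (by rw [mulVecNormSq_zero, mul_zero]) ?_
  rw [hAw, sq_sqrt_mul hh, mul_assoc]

lemma exists_coordL2Sq_eq_of_diff (hn : 0 < n) (hk : 0 < k) (hh : 0 ≤ h) (hb : IsSingVal B b) :
    ∃ c : UIdx N m k n → ℝ, c ≠ 0 ∧ coordL2Sq h A B c = (√h * (h * b)) ^ 2 * (c ⬝ᵥ c) := by
  obtain ⟨v, hv, hBv⟩ := hb.exists_mulVecNormSq_eq
  refine exists_blockSum_eq_of_diff hn hk hv ?_ (by rw [mulVecNormSq_zero, mul_zero])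
  rw [hBv, sq_sqrt_mul hh]
  ring

lemma exists_coordL2Sq_eq_max (hn : 0 < n) (hk : 0 < k) (hkm : k < m) (hh : 0 ≤ h)
    (ha : IsSingVal A a) (hb : IsSingVal B b) :
    ∃ c : UIdx N m k n → ℝ, c ≠ 0 ∧ coordL2Sq h A B c = (√h * max a (h * b)) ^ 2 * (c ⬝ᵥ c) := by
  rcases max_choice a (h * b) with hmax | hmax <;> rw [hmax]
  · exact exists_coordL2Sq_eq_of_alg hn hkm hh ha
  · exact exists_coordL2Sq_eq_of_diff hn hk hh hb

lemma exists_coordL2Sq_eq_min (hn : 0 < n) (hk : 0 < k) (hkm : k < m) (hh : 0 ≤ h)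
    (ha : IsSingVal A a) (hb : IsSingVal B b) :
    ∃ c : UIdx N m k n → ℝ, c ≠ 0 ∧ coordL2Sq h A B c = (√h * min a (h * b)) ^ 2 * (c ⬝ᵥ c) := by
  rcases min_choice a (h * b) with hmin | hmin <;> rw [hmin]
  · exact exists_coordL2Sq_eq_of_alg hn hkm hh ha
  · exact exists_coordL2Sq_eq_of_diff hn hk hh hb

lemma dotProduct_tail_self_le (v : Fin (N + 1) → ℝ) : Fin.tail v ⬝ᵥ Fin.tail v ≤ v ⬝ᵥ v := by
  rw [dotProduct, dotProduct, Fin.sum_univ_succ]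
  exact le_add_of_nonneg_left (mul_self_nonneg (v 0))

lemma coordH1Sq_le (hh : 0 ≤ h) (ha : IsGreatest {s | IsSingVal A s} a)
    (hb : IsGreatest {s | IsSingVal B s} b) (c : UIdx N m k n → ℝ) :
    coordH1Sq h A B c ≤ (√h * √(a ^ 2 + h ^ 2 * b ^ 2)) ^ 2 * (c ⬝ᵥ c) := by
  rw [mul_dotProduct_self_eq_blockSum, sq_sqrt_mul hh, Real.sq_sqrt (by positivity)]
  refine blockSum_mono (fun v => ?_) (fun w => ?_) c
  · calc h ^ 3 * mulVecNormSq B v + h * mulVecNormSq A (Fin.tail v)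
        ≤ h ^ 3 * (b ^ 2 * (v ⬝ᵥ v)) + h * (a ^ 2 * (Fin.tail v ⬝ᵥ Fin.tail v)) := by
          gcongr
          · exact mulVecNormSq_le_of_isGreatest hb v
          · exact mulVecNormSq_le_of_isGreatest ha _
      _ ≤ h ^ 3 * (b ^ 2 * (v ⬝ᵥ v)) + h * (a ^ 2 * (v ⬝ᵥ v)) := by
          gcongr
          exact dotProduct_tail_self_le v
      _ = h * (a ^ 2 + h ^ 2 * b ^ 2) * (v ⬝ᵥ v) := by ring
  · calc h * mulVecNormSq A w ≤ h * (a ^ 2 * (w ⬝ᵥ w)) := by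
          gcongr
          exact mulVecNormSq_le_of_isGreatest ha w
      _ = h * a ^ 2 * (w ⬝ᵥ w) := by ring
      _ ≤ h * (a ^ 2 + h ^ 2 * b ^ 2) * (w ⬝ᵥ w) := by
          have := dotProduct_self_nonneg w
          gcongr
          exact le_add_of_nonneg_right (by positivity)

lemma exists_coordH1Sq_le (hn : 0 < n) (hk : 0 < k) (hh : 0 ≤ h)
    (hb : IsGreatest {s | IsSingVal B s} b) :
    ∃ c : UIdx N m k n → ℝ, c ≠ 0 ∧ coordH1Sq h A B c ≤ (√h * (h * b)) ^ 2 * (c ⬝ᵥ c) := by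
  -- The coefficient vector `e` represents a constant, so its derivative contributes nothing.
  set e : Fin (N + 1) → ℝ := Pi.single 0 1 with he
  have he_dot : e ⬝ᵥ e = 1 := by simp [he]
  have he_tail : Fin.tail e = 0 := funext fun i => Pi.single_eq_of_ne (Fin.succ_ne_zero i) 1
  have he_ne : e ≠ 0 := Pi.single_ne_zero_iff.mpr one_ne_zero
  obtain ⟨c, hc, hc_eq⟩ := exists_blockSum_eq_of_diff (m := m) hn hk he_ne
    (f := fun v => h ^ 3 * mulVecNormSq B v + h * mulVecNormSq A (Fin.tail v))
    (g := fun w => h * mulVecNormSq A w) (μ := h ^ 3 * mulVecNormSq B e)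
    (by simp [he_dot, he_tail]) (by simp)
  refine ⟨c, hc, hc_eq.le.trans ?_⟩
  have := dotProduct_self_nonneg c
  gcongr
  calc h ^ 3 * mulVecNormSq B e ≤ h ^ 3 * (b ^ 2 * (e ⬝ᵥ e)) := by
        gcongr
        exact mulVecNormSq_le_of_isGreatest hb e
    _ = (√h * (h * b)) ^ 2 := by rw [he_dot, sq_sqrt_mul hh]; ring

end CoordinateNorms

section CoordinateSuprema

variable {N m k n : ℕ} {I J : Type} [Fintype I] [Fintype J]
  {A : Matrix I (Fin N) ℝ} {B : Matrix J (Fin (N + 1)) ℝ} {h a b b' : ℝ}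

lemma sSup_coordL2Sq_div (hn : 0 < n) (hk : 0 < k) (hkm : k < m) (hh : 0 ≤ h)
    (ha : IsGreatest {s | IsSingVal A s} a) (hb : IsGreatest {s | IsSingVal B s} b) :
    sSup {r : ℝ | ∃ c : UIdx N m k n → ℝ, c ≠ 0 ∧ r = √(coordL2Sq h A B c) / √(c ⬝ᵥ c)} =
      √h * max a (h * b) := by
  have hM : 0 ≤ √h * max a (h * b) := mul_nonneg (Real.sqrt_nonneg h) (le_max_of_le_left ha.1.1)
  obtain ⟨c, hc, hc_eq⟩ := exists_coordL2Sq_eq_max hn hk hkm hh ha.1 hb.1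
  exact (sSup_sqrt_div_sqrt_le hM (coordL2Sq_le hh ha hb)).antisymm
    (le_sSup_sqrt_div_sqrt hM (coordL2Sq_le hh ha hb) hc (dotProduct_self_pos hc) hc_eq.ge)

lemma sSup_div_coordL2Sq (hn : 0 < n) (hk : 0 < k) (hkm : k < m) (hh : 0 < h)
    (ha : IsLeast {s | IsSingVal A s} a) (ha₀ : 0 < a)
    (hb : IsLeast {s | IsSingVal B s} b) (hb₀ : 0 < b) :
    sSup {r : ℝ | ∃ c : UIdx N m k n → ℝ, c ≠ 0 ∧ r = √(c ⬝ᵥ c) / √(coordL2Sq h A B c)} =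
      (√h * min a (h * b))⁻¹ := by
  have hM : 0 < √h * min a (h * b) := by positivity
  obtain ⟨c, hc, hc_eq⟩ := exists_coordL2Sq_eq_min hn hk hkm hh.le ha.1 hb.1
  exact (sSup_sqrt_div_sqrt_le_inv hM (le_coordL2Sq hh.le ha hb)).antisymm
    (inv_le_sSup_sqrt_div_sqrt hM (le_coordL2Sq hh.le ha hb) hM hc (dotProduct_self_pos hc)
      hc_eq.le)

lemma sSup_coordH1Sq_div_mem_Icc (hn : 0 < n) (hk : 0 < k) (hkm : k < m) (hh : 0 ≤ h)
    (ha : IsGreatest {s | IsSingVal A s} a) (hb : IsGreatest {s | IsSingVal B s} b) :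
    sSup {r : ℝ | ∃ c : UIdx N m k n → ℝ, c ≠ 0 ∧ r = √(coordH1Sq h A B c) / √(c ⬝ᵥ c)} ∈
      Set.Icc (√h * max a (h * b)) (√h * √(a ^ 2 + h ^ 2 * b ^ 2)) := by
  have hM : 0 ≤ √h * √(a ^ 2 + h ^ 2 * b ^ 2) := by positivity
  obtain ⟨c, hc, hc_eq⟩ := exists_coordL2Sq_eq_max hn hk hkm hh ha.1 hb.1
  exact ⟨le_sSup_sqrt_div_sqrt hM (coordH1Sq_le hh ha hb) hc (dotProduct_self_pos hc)
      (hc_eq.ge.trans (coordL2Sq_le_coordH1Sq hh c)),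
    sSup_sqrt_div_sqrt_le hM (coordH1Sq_le hh ha hb)⟩

lemma sSup_div_coordH1Sq_mem_Icc (hn : 0 < n) (hk : 0 < k) (hh : 0 < h)
    (ha : IsLeast {s | IsSingVal A s} a) (ha₀ : 0 < a)
    (hb : IsLeast {s | IsSingVal B s} b) (hb₀ : 0 < b) (hb' : IsGreatest {s | IsSingVal B s} b') :
    sSup {r : ℝ | ∃ c : UIdx N m k n → ℝ, c ≠ 0 ∧ r = √(c ⬝ᵥ c) / √(coordH1Sq h A B c)} ∈
      Set.Icc (√h * (h * b'))⁻¹ (√h * min a (h * b))⁻¹ := by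
  have hb₀' : 0 < b' := hb₀.trans_le (hb'.2 hb.1)
  have hM : 0 < √h * min a (h * b) := by positivity
  have hle (c : UIdx N m k n → ℝ) :
      (√h * min a (h * b)) ^ 2 * (c ⬝ᵥ c) ≤ coordH1Sq h A B c :=
    (le_coordL2Sq hh.le ha hb c).trans (coordL2Sq_le_coordH1Sq hh.le c)
  obtain ⟨c, hc, hc_le⟩ := exists_coordH1Sq_le (A := A) (m := m) hn hk hh.le hb'
  exact ⟨inv_le_sSup_sqrt_div_sqrt hM hle (by positivity) hc (dotProduct_self_pos hc) hc_le,
    sSup_sqrt_div_sqrt_le_inv hM hle⟩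

end CoordinateSuprema

section Components

lemma integral_comp_sub_div_sub (f : ℝ → ℝ) (a b : ℝ) :
    ∫ s in a..b, f ((s - a) / (b - a)) = (b - a) * ∫ s in (0 : ℝ)..1, f s := by
  rcases eq_or_ne a b with rfl | hab
  · simp
  · have hba : b - a ≠ 0 := sub_ne_zero.mpr hab.symm
    simp [intervalIntegral.integral_comp_sub_right (fun s => f (s / (b - a))),
      intervalIntegral.integral_comp_div, hba]

variable {N m k n : ℕ} {p : ℕ → ℝ[X]} {t : ℕ → ℝ}

lemma xalg_eq_eval (p : ℕ → ℝ[X]) (t : ℕ → ℝ) (c : UIdx N m k n → ℝ) (j : Fin n)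
    (κ : Fin (m - k)) (s : ℝ) :
    xalg N m k n p t c j κ s =
      (∑ l : Fin N, algCoeff c j κ l • p l).eval ((s - t j) / (t (j + 1) - t j)) := by
  simp [xalg, algCoeff, eval_finsetSum]

lemma xdiff_eq_mul_eval (p : ℕ → ℝ[X]) (t : ℕ → ℝ) (c : UIdx N m k n → ℝ) (j : Fin n)
    (κ : Fin k) (s : ℝ) :
    xdiff N m k n p t c j κ s = (t (j + 1) - t j) *
      (∑ l, diffCoeff c j κ l • pbarPoly p l).eval ((s - t j) / (t (j + 1) - t j)) := by
  simp only [xdiff, diffCoeff, eval_finsetSum, eval_smul, eval_pbarPoly, smul_eq_mul,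
    Finset.mul_sum]
  exact Finset.sum_congr rfl fun l _ => mul_left_comm _ _ _

lemma deriv_xdiff {j : Fin n} (htj : t j ≠ t (j + 1)) (c : UIdx N m k n → ℝ) (κ : Fin k) (s : ℝ) :
    deriv (xdiff N m k n p t c j κ) s =
      (∑ l, Fin.tail (diffCoeff c j κ) l • p l).eval ((s - t j) / (t (j + 1) - t j)) := by
  have hstep : t (j + 1) - t j ≠ 0 := sub_ne_zero.mpr htj.symm
  have hinner : HasDerivAt (fun s => (s - t j) / (t (j + 1) - t j)) (1 / (t (j + 1) - t j)) s :=
    ((hasDerivAt_id s).sub_const _).div_const _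
  have houter := ((∑ l, diffCoeff c j κ l • pbarPoly p l).hasDerivAt _).comp s hinner
  rw [derivative_sum_smul_pbarPoly] at houter
  rw [funext (xdiff_eq_mul_eval p t c j κ)]
  refine (houter.const_mul _).deriv.trans ?_
  rw [mul_one_div, mul_div_cancel₀ _ hstep]

lemma integral_xalg_sq (p : ℕ → ℝ[X]) (t : ℕ → ℝ) (c : UIdx N m k n → ℝ) (j : Fin n)
    (κ : Fin (m - k)) :
    ∫ s in t j..t (j + 1), xalg N m k n p t c j κ s ^ 2 =
      (t (j + 1) - t j) * ∫ s in (0 : ℝ)..1, (∑ l : Fin N, algCoeff c j κ l • p l).eval s ^ 2 := by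
  simp only [xalg_eq_eval]
  exact integral_comp_sub_div_sub (fun s => (∑ l : Fin N, algCoeff c j κ l • p l).eval s ^ 2) _ _

lemma integral_xdiff_sq (p : ℕ → ℝ[X]) (t : ℕ → ℝ) (c : UIdx N m k n → ℝ) (j : Fin n)
    (κ : Fin k) :
    ∫ s in t j..t (j + 1), xdiff N m k n p t c j κ s ^ 2 =
      (t (j + 1) - t j) ^ 3 *
        ∫ s in (0 : ℝ)..1, (∑ l, diffCoeff c j κ l • pbarPoly p l).eval s ^ 2 := by
  simp only [xdiff_eq_mul_eval, mul_pow, intervalIntegral.integral_const_mul]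
  rw [integral_comp_sub_div_sub (fun s => (∑ l, diffCoeff c j κ l • pbarPoly p l).eval s ^ 2)]
  ring

lemma integral_deriv_xdiff_sq {j : Fin n} (htj : t j ≠ t (j + 1)) (c : UIdx N m k n → ℝ)
    (κ : Fin k) :
    ∫ s in t j..t (j + 1), deriv (xdiff N m k n p t c j κ) s ^ 2 =
      (t (j + 1) - t j) *
        ∫ s in (0 : ℝ)..1, (∑ l, Fin.tail (diffCoeff c j κ) l • p l).eval s ^ 2 := by
  simp only [deriv_xdiff htj]
  exact integral_comp_sub_div_sub
    (fun s => (∑ l, Fin.tail (diffCoeff c j κ) l • p l).eval s ^ 2) _ _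

lemma integral_xdiff_sq_add_deriv_sq {j : Fin n} (htj : t j ≠ t (j + 1)) (c : UIdx N m k n → ℝ)
    (κ : Fin k) :
    ∫ s in t j..t (j + 1),
        (xdiff N m k n p t c j κ s ^ 2 + deriv (xdiff N m k n p t c j κ) s ^ 2) =
      (∫ s in t j..t (j + 1), xdiff N m k n p t c j κ s ^ 2) +
        ∫ s in t j..t (j + 1), deriv (xdiff N m k n p t c j κ) s ^ 2 := by
  refine intervalIntegral.integral_add (Continuous.intervalIntegrable ?_ _ _)
    (Continuous.intervalIntegrable ?_ _ _)
  · simp only [xdiff_eq_mul_eval]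
    fun_prop
  · simp only [deriv_xdiff htj]
    fun_prop

variable {h : ℝ} {σ γ : Fin N → ℝ} {σb γb : Fin (N + 1) → ℝ}

lemma normL2sq_eq_coordL2Sq (hstep : ∀ j < n, t (j + 1) = t j + h)
    (hdeg : ∀ i < N, (p i).natDegree ≤ N - 1) (hq : IsQuad σ γ (2 * N - 2))
    (hqb : IsQuad σb γb (2 * N)) (c : UIdx N m k n → ℝ) :
    normL2sq N m k n p t c = coordL2Sq h (Gmat γ * Vmat N p σ) (Gmat γb * Vbmat N p σb) c := by
  rw [← Nat.mul_sub_one 2 N] at hq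
  rw [normL2sq, coordL2Sq, blockSum, Gmat_mul_Vmat, Gmat_mul_Vbmat]
  refine Finset.sum_congr rfl fun j _ => ?_
  have hsub : t (j + 1) - t j = h := sub_eq_of_eq_add' (hstep j j.isLt)
  simp only [hq.mulVecNormSq_weightedCollocation fun l : Fin N => hdeg l l.isLt,
    hqb.mulVecNormSq_weightedCollocation (natDegree_pbarPoly_le hdeg),
    integral_xdiff_sq, integral_xalg_sq, hsub]

lemma normH1sq_eq_coordH1Sq (hh : h ≠ 0) (hstep : ∀ j < n, t (j + 1) = t j + h)
    (hdeg : ∀ i < N, (p i).natDegree ≤ N - 1) (hq : IsQuad σ γ (2 * N - 2))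
    (hqb : IsQuad σb γb (2 * N)) (c : UIdx N m k n → ℝ) :
    normH1sq N m k n p t c = coordH1Sq h (Gmat γ * Vmat N p σ) (Gmat γb * Vbmat N p σb) c := by
  rw [← Nat.mul_sub_one 2 N] at hq
  rw [normH1sq, coordH1Sq, blockSum, Gmat_mul_Vmat, Gmat_mul_Vbmat]
  refine Finset.sum_congr rfl fun j _ => ?_
  have hsub : t (j + 1) - t j = h := sub_eq_of_eq_add' (hstep j j.isLt)
  have htj : t j ≠ t (j + 1) := (sub_ne_zero.mp (hsub.trans_ne hh)).symm
  simp only [hq.mulVecNormSq_weightedCollocation fun l : Fin N => hdeg l l.isLt,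
    hqb.mulVecNormSq_weightedCollocation (natDegree_pbarPoly_le hdeg),
    integral_xdiff_sq_add_deriv_sq htj, integral_deriv_xdiff_sq htj,
    integral_xdiff_sq, integral_xalg_sq, hsub]

end Components

lemma rpow_neg_half_mul_inv {h : ℝ} (hh : 0 ≤ h) (x : ℝ) :
    h ^ (-(1 : ℝ) / 2) * x⁻¹ = (√h * x)⁻¹ := by
  rw [neg_div, Real.rpow_neg hh, ← Real.sqrt_eq_rpow, mul_inv]

lemma rpow_neg_three_halves_mul_inv {h : ℝ} (hh : 0 < h) (x : ℝ) :
    h ^ (-(3 : ℝ) / 2) * x⁻¹ = (√h * (h * x))⁻¹ := by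
  rw [show -(3 : ℝ) / 2 = -1 / 2 + -1 by norm_num, Real.rpow_add hh, Real.rpow_neg_one, mul_assoc,
    ← mul_inv, rpow_neg_half_mul_inv hh.le]

theorem stmt5_general (N m k n : ℕ) (hk : 1 ≤ k) (hkm : k < m) (hn : 1 ≤ n)
    (h : ℝ) (hpos : 0 < h) (t : ℕ → ℝ) (hstep : ∀ j < n, t (j + 1) = t j + h)
    (p : ℕ → Polynomial ℝ)
    (hdeg : ∀ i < N, (p i).natDegree ≤ N - 1)
    (hli : LinearIndependent ℝ fun i : Fin N => p i)
    (σ γ : Fin N → ℝ) (σb γb : Fin (N + 1) → ℝ)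
    (hq : IsQuad σ γ (2 * N - 2)) (hqb : IsQuad σb γb (2 * N))
    (smaxV sminV smaxVb sminVb : ℝ)
    (hsmaxV : IsGreatest {s | IsSingVal (Gmat γ * Vmat N p σ) s} smaxV)
    (hsminV : IsLeast {s | IsSingVal (Gmat γ * Vmat N p σ) s} sminV)
    (hsmaxVb : IsGreatest {s | IsSingVal (Gmat γb * Vbmat N p σb) s} smaxVb)
    (hsminVb : IsLeast {s | IsSingVal (Gmat γb * Vbmat N p σb) s} sminVb) :
    sSup {r : ℝ | ∃ c : UIdx N m k n → ℝ, c ≠ 0 ∧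
        r = Real.sqrt (normL2sq N m k n p t c) / enormU c} =
      h ^ ((1:ℝ)/2) * max smaxV (h * smaxVb) ∧
    sSup {r : ℝ | ∃ c : UIdx N m k n → ℝ, c ≠ 0 ∧
        r = enormU c / Real.sqrt (normL2sq N m k n p t c)} =
      h ^ (-(1:ℝ)/2) * (min sminV (h * sminVb))⁻¹ ∧
    (h ^ ((1:ℝ)/2) * max smaxV (h * smaxVb) ≤
        sSup {r : ℝ | ∃ c : UIdx N m k n → ℝ, c ≠ 0 ∧
          r = Real.sqrt (normH1sq N m k n p t c) / enormU c} ∧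
      sSup {r : ℝ | ∃ c : UIdx N m k n → ℝ, c ≠ 0 ∧
          r = Real.sqrt (normH1sq N m k n p t c) / enormU c}
        ≤ h ^ ((1:ℝ)/2) * Real.sqrt (smaxV ^ 2 + h ^ 2 * smaxVb ^ 2)) ∧
    (h ^ (-(3:ℝ)/2) * smaxVb⁻¹ ≤
        sSup {r : ℝ | ∃ c : UIdx N m k n → ℝ, c ≠ 0 ∧
          r = enormU c / Real.sqrt (normH1sq N m k n p t c)} ∧
      sSup {r : ℝ | ∃ c : UIdx N m k n → ℝ, c ≠ 0 ∧
          r = enormU c / Real.sqrt (normH1sq N m k n p t c)}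
        ≤ h ^ (-(1:ℝ)/2) * (min sminV (h * sminVb))⁻¹) := by
  have hsminV_pos : 0 < sminV :=
    IsSingVal.pos_of_weightedCollocation (Gmat_mul_Vmat p σ γ ▸ hsminV.1) hq hli fun l =>
      Nat.lt_of_le_pred l.pos (hdeg l l.isLt)
  have hsminVb_pos : 0 < sminVb :=
    IsSingVal.pos_of_weightedCollocation (Gmat_mul_Vbmat p σb γb ▸ hsminVb.1) hqb
      (linearIndependent_pbarPoly hli) fun l => Nat.lt_succ_of_le (natDegree_pbarPoly_le hdeg l)
  simp only [normL2sq_eq_coordL2Sq hstep hdeg hq hqb,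
    normH1sq_eq_coordH1Sq hpos.ne' hstep hdeg hq hqb, enormU_eq_sqrt_dotProduct,
    ← Real.sqrt_eq_rpow, rpow_neg_half_mul_inv hpos.le, rpow_neg_three_halves_mul_inv hpos]
  exact ⟨sSup_coordL2Sq_div hn hk hkm hpos.le hsmaxV hsmaxVb,
    sSup_div_coordL2Sq hn hk hkm hpos hsminV hsminV_pos hsminVb hsminVb_pos,
    sSup_coordH1Sq_div_mem_Icc hn hk hkm hpos.le hsmaxV hsmaxVb,
    sSup_div_coordH1Sq_mem_Icc hn hk hpos hsminV hsminV_pos hsminVb hsminVb_pos hsmaxVb⟩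

theorem stmt5 (N m k n : ℕ) (hN : 1 ≤ N) (hk : 1 ≤ k) (hkm : k < m) (hn : 1 ≤ n)
    (h : ℝ) (hpos : 0 < h) (t : ℕ → ℝ) (hstep : ∀ j < n, t (j + 1) = t j + h)
    (p : ℕ → Polynomial ℝ)
    (hdeg : ∀ i < N, (p i).natDegree ≤ N - 1)
    (hli : LinearIndependent ℝ fun i : Fin N => p i)
    (σ γ : Fin N → ℝ) (σb γb : Fin (N + 1) → ℝ)
    (hq : IsQuad σ γ (2 * N - 2)) (hqb : IsQuad σb γb (2 * N))
    (smaxV sminV smaxVb sminVb : ℝ)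
    (hsmaxV : IsGreatest {s | IsSingVal (Gmat γ * Vmat N p σ) s} smaxV)
    (hsminV : IsLeast {s | IsSingVal (Gmat γ * Vmat N p σ) s} sminV)
    (hsmaxVb : IsGreatest {s | IsSingVal (Gmat γb * Vbmat N p σb) s} smaxVb)
    (hsminVb : IsLeast {s | IsSingVal (Gmat γb * Vbmat N p σb) s} sminVb)
    (hcond : h * smaxVb ≤ sminV) :
    sSup {r : ℝ | ∃ c : UIdx N m k n → ℝ, c ≠ 0 ∧
        r = Real.sqrt (normL2sq N m k n p t c) / enormU c} = h ^ ((1:ℝ)/2) * smaxV ∧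
    sSup {r : ℝ | ∃ c : UIdx N m k n → ℝ, c ≠ 0 ∧
        r = enormU c / Real.sqrt (normL2sq N m k n p t c)} = h ^ (-(3:ℝ)/2) * sminVb⁻¹ ∧
    (h ^ ((1:ℝ)/2) * smaxV ≤
        sSup {r : ℝ | ∃ c : UIdx N m k n → ℝ, c ≠ 0 ∧
          r = Real.sqrt (normH1sq N m k n p t c) / enormU c} ∧
      sSup {r : ℝ | ∃ c : UIdx N m k n → ℝ, c ≠ 0 ∧
          r = Real.sqrt (normH1sq N m k n p t c) / enormU c}
        ≤ h ^ ((1:ℝ)/2) * Real.sqrt (smaxV ^ 2 + h ^ 2 * smaxVb ^ 2)) ∧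
    (h ^ (-(3:ℝ)/2) * smaxVb⁻¹ ≤
        sSup {r : ℝ | ∃ c : UIdx N m k n → ℝ, c ≠ 0 ∧
          r = enormU c / Real.sqrt (normH1sq N m k n p t c)} ∧
      sSup {r : ℝ | ∃ c : UIdx N m k n → ℝ, c ≠ 0 ∧
          r = enormU c / Real.sqrt (normH1sq N m k n p t c)}
        ≤ h ^ (-(3:ℝ)/2) * sminVb⁻¹) := by
  simpa only [max_eq_left (hcond.trans (hsminV.2 hsmaxV.1)),
    min_eq_right ((mul_le_mul_of_nonneg_left (hsminVb.2 hsmaxVb.1) hpos.le).trans hcond),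
    rpow_neg_half_mul_inv hpos.le, rpow_neg_three_halves_mul_inv hpos]
    using stmt5_general N m k n hk hkm hn h hpos t hstep p hdeg hli σ γ σb γb hq hqb
      smaxV sminV smaxVb sminVb hsmaxV hsminV hsmaxVb hsminVb
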